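/- Let b : M → ℝ be a family of coefficients indexed by multi-indices, let q ∈ ℕ, and assume A² := ∑_{α∈M} b_α² (2ℕ)^{−qα} < ∞. Let δ > 0 and let z : ℕ₊ → ℂ be a finitely supported sequence satisfying ∑_{α∈M, α≠0} |z^α|² (2ℕ)^{qα} ≤ δ². Then the series ∑_{α∈M} b_α z^α converges absolutely, and |∑_{α∈M} b_α z^α| ≤ |b₀| + A·δ, where b₀ is the coefficient at the zero multi-index. (Convergence of the Hermite transform of a Kondratiev distribution on the infinite-dimensional neighborhood B_q(δ).) -/

import Mathlib

/-!
The bound is the Cauchy–Schwarz inequality with the weights split evenly: since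
`(2ℕ)^{-qα} (2ℕ)^{qα} = 1`, each term factors as
`|b_α z^α| = (|b_α| (2ℕ)^{-qα/2}) (|z^α| (2ℕ)^{qα/2})`, so the sum over `α ≠ 0` is at most
`A·δ`. The remaining term `α = 0` contributes `|b₀|` because `z^0 = 1`.
-/

open scoped BigOperators

/-- A multi-index: a finitely supported function `ℕ₊ → ℕ`. -/
abbrev MultiIndex := ℕ+ →₀ ℕ

/-- For a multi-index `α` and a real number `c`,
`(2ℕ)^{cα} = ∏_j (2j)^{c·α(j)}` (a finite product over the support of `α`). -/
noncomputable def twoNpow (c : ℝ) (α : MultiIndex) : ℝ :=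
  α.prod fun j n => (2 * (j : ℝ)) ^ (c * (n : ℝ))

/-- For a finitely supported sequence `z : ℕ₊ → ℂ` and a multi-index `α`,
`z^α = ∏_{j} z(j)^{α(j)}` (a finite product). -/
noncomputable def zpowM (z : ℕ+ →₀ ℂ) (α : MultiIndex) : ℂ :=
  α.prod fun j n => z j ^ n

theorem twoNpow_pos (c : ℝ) (α : MultiIndex) : 0 < twoNpow c α := by
  refine Finset.prod_pos fun j _ => Real.rpow_pos_of_pos ?_ _
  have : (0 : ℝ) < (j : ℝ) := by exact_mod_cast j.pos
  positivity

theorem twoNpow_neg_mul (c : ℝ) (α : MultiIndex) : twoNpow (-c) α * twoNpow c α = 1 := by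
  unfold twoNpow Finsupp.prod
  rw [← Finset.prod_mul_distrib]
  refine Finset.prod_eq_one fun j _ => ?_
  have hj : (0 : ℝ) < 2 * (j : ℝ) := by
    have : (0 : ℝ) < (j : ℝ) := by exact_mod_cast j.pos
    positivity
  rw [← Real.rpow_add hj]
  simp

/-- The even splitting of the weights to which Cauchy–Schwarz is applied. -/
theorem norm_term_eq (b : MultiIndex → ℝ) (c : ℝ) (z : ℕ+ →₀ ℂ) (α : MultiIndex) :
    ‖(b α : ℂ) * zpowM z α‖ =
      √(b α ^ 2 * twoNpow (-c) α) * √(‖zpowM z α‖ ^ 2 * twoNpow c α) := by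
  have h1 := (twoNpow_pos (-c) α).le
  rw [← Real.sqrt_mul (by positivity),
    show b α ^ 2 * twoNpow (-c) α * (‖zpowM z α‖ ^ 2 * twoNpow c α) =
      (b α * ‖zpowM z α‖) ^ 2 * (twoNpow (-c) α * twoNpow c α) by ring,
    twoNpow_neg_mul, mul_one, Real.sqrt_sq_eq_abs, abs_mul, abs_norm, norm_mul,
    Complex.norm_real, Real.norm_eq_abs]

/-- Convergence of the Hermite transform of a Kondratiev distribution on the
infinite-dimensional neighborhood `B_q(δ)`. -/
theorem hermite_transform_convergence
    (b : MultiIndex → ℝ) (q : ℕ)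
    (hb : Summable fun α : MultiIndex => b α ^ 2 * twoNpow (-(q : ℝ)) α)
    (δ : ℝ) (hδ : 0 < δ) (z : ℕ+ →₀ ℂ)
    (hzsum : Summable fun α : {α : MultiIndex // α ≠ 0} =>
      ‖zpowM z α.1‖ ^ 2 * twoNpow (q : ℝ) α.1)
    (hz : (∑' α : {α : MultiIndex // α ≠ 0},
      ‖zpowM z α.1‖ ^ 2 * twoNpow (q : ℝ) α.1) ≤ δ ^ 2) :
    (Summable fun α : MultiIndex => ‖(b α : ℂ) * zpowM z α‖) ∧
      ‖∑' α : MultiIndex, (b α : ℂ) * zpowM z α‖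
        ≤ |b 0| + Real.sqrt (∑' α : MultiIndex, b α ^ 2 * twoNpow (-(q : ℝ)) α) * δ := by
  have hpos : ∀ (c : ℝ) (α : MultiIndex), 0 ≤ twoNpow c α := fun c α => (twoNpow_pos c α).le
  have hfin : ∀ u : Finset {α : MultiIndex // α ≠ 0},
      ∑ α ∈ u, ‖(b α.1 : ℂ) * zpowM z α.1‖ ≤
        √(∑' α : MultiIndex, b α ^ 2 * twoNpow (-(q : ℝ)) α) * δ := by
    intro u
    simp only [norm_term_eq b q z]
    refine (Real.sum_sqrt_mul_sqrt_le u
      (fun α => mul_nonneg (sq_nonneg (b α.1)) (hpos (-(q : ℝ)) α.1))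
      (fun α => mul_nonneg (sq_nonneg ‖zpowM z α.1‖) (hpos q α.1))).trans ?_
    refine mul_le_mul (Real.sqrt_le_sqrt ?_) ?_ (Real.sqrt_nonneg _) (Real.sqrt_nonneg _)
    · have h := hb.sum_le_tsum (u.map (Function.Embedding.subtype _))
        (fun α _ => mul_nonneg (sq_nonneg (b α)) (hpos _ α))
      simpa using h
    · rw [Real.sqrt_le_left hδ.le]
      exact (hzsum.sum_le_tsum u
        (fun α _ => mul_nonneg (sq_nonneg _) (hpos _ α.1))).trans hz
  have hsub : Summable fun α : {α : MultiIndex // α ≠ 0} => ‖(b α.1 : ℂ) * zpowM z α.1‖ :=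
    summable_of_sum_le (fun _ => norm_nonneg _) hfin
  have hsum : Summable fun α : MultiIndex => ‖(b α : ℂ) * zpowM z α‖ :=
    (Set.finite_singleton (0 : MultiIndex)).summable_compl_iff.1 hsub
  refine ⟨hsum, (norm_tsum_le_tsum_norm hsum).trans ?_⟩
  have hsplit : ‖(b 0 : ℂ) * zpowM z 0‖ +
      ∑' α : {α : MultiIndex // α ≠ 0}, ‖(b α.1 : ℂ) * zpowM z α.1‖ =
        ∑' α : MultiIndex, ‖(b α : ℂ) * zpowM z α‖ := by
    have h := ((Set.finite_singleton (0 : MultiIndex)).summable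
      fun α => ‖(b α : ℂ) * zpowM z α‖).tsum_add_tsum_compl hsub
    rw [tsum_singleton (0 : MultiIndex) fun α => ‖(b α : ℂ) * zpowM z α‖] at h
    exact h
  have hzero : ‖(b 0 : ℂ) * zpowM z 0‖ = |b 0| := by simp [zpowM]
  rw [← hsplit, hzero]
  gcongr
  exact Real.tsum_le_of_sum_le (fun _ => norm_nonneg _) hfin
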